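/- Let $h, M$ be positive integers with $4 \mid h$, $h \ge 4$, and $M \ge h$, let $x, y \in \{0,1\}^M$ satisfy the promise $\sum_{i} x_i y_i \le 1$, and let $H_{x,y}$ be the gadget graph defined as follows: on disjoint vertex sets $A = \{a_i\}_{i \in \mathbb{Z}_M}$, $B = \{b_i\}_{i \in \mathbb{Z}_M}$, $C = \{c_i\}_{i \in \mathbb{Z}_M}$, $D = \{d_i\}_{i \in \mathbb{Z}_M}$, $E = \{e_i\}_{i \in \mathbb{Z}_M}$ (indices modulo $M$), with edges for each $i$: if $x_i = 1$, the edges $\{a_i, b_{i+j}\}$ for $0 \le j \le \tfrac{3h}{4}-1$ and $\{d_i, b_{i+j}\}$ for $\tfrac{3h}{4} \le j \le h-1$; if $x_i = 0$, the edges $\{a_i, b_{i+j}\}$ for $0 \le j \le \tfrac{h}{4}-1$ and $\{d_i, b_{i+j}\}$ for $\tfrac{h}{4} \le j \le h-1$; and symmetrically with $y$, $C$, $E$ in place of $x$, $B$, $D$; and no other edges. Then the h-index of $H_{x,y}$ equals exactly $h$, and the ccdh satisfies $C_{H_{x,y}}\big(\tfrac{3h}{2}\big) = \sum_i x_i y_i$;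 in particular $C_{H_{x,y}}(\tfrac{3h}{2}) = 0$ if the supports of $x$ and $y$ are disjoint, and $C_{H_{x,y}}(\tfrac{3h}{2}) = 1$ if they intersect in exactly one index. -/

import Mathlib

/-- The complementary cumulative degree histogram (ccdh) of a graph:
`C(d) = |{v ∈ V : deg(v) ≥ d}|`. -/
noncomputable def ccdh {V : Type*} [Fintype V] (G : SimpleGraph V) [DecidableRel G.Adj]
    (d : ℕ) : ℕ :=
  {v : V | d ≤ G.degree v}.ncard

/-- The h-index of a graph: the largest `d ∈ [n]` with `C(d) ≥ d` (and `0` if none). -/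
noncomputable def hIndex {V : Type*} [Fintype V] (G : SimpleGraph V) [DecidableRel G.Adj] : ℕ :=
  ((Finset.Icc 1 (Fintype.card V)).filter fun d => d ≤ ccdh G d).sup id

/-- The underlying (asymmetric) edge relation of the h-index-sensitive gadget graph
`H_{x,y}`.  The vertex set consists of five blocks `A, B, C, D, E`, each a copy of
`ZMod M`, encoded as `Fin 5 × ZMod M` with `aᵢ = (0, i)`, `bᵢ = (1, i)`, `cᵢ = (2, i)`,
`dᵢ = (3, i)`, `eᵢ = (4, i)`.  For each `i` (indices mod `M`): if `xᵢ = 1` there are the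
edges `{aᵢ, b_{i+j}}` for `0 ≤ j ≤ 3h/4 - 1` and `{dᵢ, b_{i+j}}` for
`3h/4 ≤ j ≤ h - 1`; if `xᵢ = 0` there are the edges `{aᵢ, b_{i+j}}` for
`0 ≤ j ≤ h/4 - 1` and `{dᵢ, b_{i+j}}` for `h/4 ≤ j ≤ h - 1`; and symmetrically with
`y`, `C`, `E` in place of `x`, `B`, `D`. -/
def hGadgetRel (h M : ℕ) (x y : ZMod M → ℕ) :
    Fin 5 × ZMod M → Fin 5 × ZMod M → Prop := fun u w =>
  ∃ i : ZMod M, ∃ j : ℕ, j < h ∧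
    ((u = (0, i) ∧ w = (1, i + (j : ZMod M)) ∧
        ((x i = 1 ∧ j < 3 * h / 4) ∨ (x i = 0 ∧ j < h / 4))) ∨
     (u = (3, i) ∧ w = (1, i + (j : ZMod M)) ∧
        ((x i = 1 ∧ 3 * h / 4 ≤ j) ∨ (x i = 0 ∧ h / 4 ≤ j))) ∨
     (u = (0, i) ∧ w = (2, i + (j : ZMod M)) ∧
        ((y i = 1 ∧ j < 3 * h / 4) ∨ (y i = 0 ∧ j < h / 4))) ∨
     (u = (4, i) ∧ w = (2, i + (j : ZMod M)) ∧
        ((y i = 1 ∧ 3 * h / 4 ≤ j) ∨ (y i = 0 ∧ h / 4 ≤ j))))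

/-- The h-index-sensitive gadget graph `H_{x,y}` used in the reduction from promise
set-disjointness establishing the `Ω(m/h)` lower bound. -/
def hGadget (h M : ℕ) (x y : ZMod M → ℕ) : SimpleGraph (Fin 5 × ZMod M) :=
  SimpleGraph.fromRel (hGadgetRel h M x y)

noncomputable instance (h M : ℕ) (x y : ZMod M → ℕ) :
    DecidableRel (hGadget h M x y).Adj :=
  Classical.decRel _

/-- number of `A`-edges -/
def tt (h : ℕ) (n : ℕ) : ℕ := if n = 1 then 3 * h / 4 else h / 4

lemma tt_lt (h n j : ℕ) (hn : n ≤ 1) :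
    ((n = 1 ∧ j < 3 * h / 4) ∨ (n = 0 ∧ j < h / 4)) ↔ j < tt h n := by
  unfold tt
  interval_cases n <;> simp

lemma tt_le (h n j : ℕ) (hn : n ≤ 1) :
    ((n = 1 ∧ 3 * h / 4 ≤ j) ∨ (n = 0 ∧ h / 4 ≤ j)) ↔ tt h n ≤ j := by
  unfold tt
  interval_cases n <;> simp

lemma rel_iff (h M : ℕ) (x y : ZMod M → ℕ) (hx : ∀ i, x i ≤ 1) (hy : ∀ i, y i ≤ 1)
    (u w : Fin 5 × ZMod M) : hGadgetRel h M x y u w ↔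
    ∃ j : ℕ, j < h ∧ w.2 = u.2 + (j : ZMod M) ∧
    ((u.1 = 0 ∧ w.1 = 1 ∧ j < tt h (x u.2)) ∨ (u.1 = 3 ∧ w.1 = 1 ∧ tt h (x u.2) ≤ j) ∨
     (u.1 = 0 ∧ w.1 = 2 ∧ j < tt h (y u.2)) ∨ (u.1 = 4 ∧ w.1 = 2 ∧ tt h (y u.2) ≤ j)) := by
  unfold hGadgetRel
  obtain ⟨a, i⟩ := u
  obtain ⟨b, k⟩ := w
  simp only [tt_lt h _ _ (hx _), tt_lt h _ _ (hy _), tt_le h _ _ (hx _), tt_le h _ _ (hy _),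
    Prod.mk.injEq]
  constructor
  · rintro ⟨i', j, hj, H⟩
    refine ⟨j, hj, ?_⟩
    rcases H with ⟨⟨rfl, rfl⟩, ⟨rfl, rfl⟩, H⟩ | ⟨⟨rfl, rfl⟩, ⟨rfl, rfl⟩, H⟩ |
      ⟨⟨rfl, rfl⟩, ⟨rfl, rfl⟩, H⟩ | ⟨⟨rfl, rfl⟩, ⟨rfl, rfl⟩, H⟩ <;> simp [H]
  · rintro ⟨j, hj, rfl, H⟩
    refine ⟨i, j, hj, ?_⟩
    rcases H with ⟨rfl, rfl, H⟩ | ⟨rfl, rfl, H⟩ | ⟨rfl, rfl, H⟩ | ⟨rfl, rfl, H⟩ <;> simp [H]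

lemma adj_iff (h M : ℕ) (x y : ZMod M → ℕ) (u w : Fin 5 × ZMod M) :
    (hGadget h M x y).Adj u w ↔ u ≠ w ∧ (hGadgetRel h M x y u w ∨ hGadgetRel h M x y w u) := by
  unfold hGadget
  rw [SimpleGraph.fromRel_adj]

lemma cast_inj' (h M : ℕ) [NeZero M] (hM : h ≤ M) (j k : ℕ) (hj : j < h) (hk : k < h)
    (e : (j : ZMod M) = k) : j = k := by
  have := (ZMod.natCast_eq_natCast_iff' j k M).1 e
  rwa [Nat.mod_eq_of_lt (by omega), Nat.mod_eq_of_lt (by omega)] at this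

lemma tt_le_h (h n : ℕ) : tt h n ≤ h := by
  unfold tt
  split_ifs <;> omega

section
variable (h M : ℕ) [NeZero M] (hM : h ≤ M) (x y : ZMod M → ℕ)
  (hx : ∀ i, x i ≤ 1) (hy : ∀ i, y i ≤ 1)
include hM hx hy

lemma deg_a (i : ZMod M) :
    (hGadget h M x y).degree (0, i) = tt h (x i) + tt h (y i) := by
  rw [← SimpleGraph.card_neighborFinset_eq_degree]
  have : (hGadget h M x y).neighborFinset (0, i) =
      (Finset.range (tt h (x i))).image (fun j : ℕ => ((1 : Fin 5), i + (j : ZMod M))) ∪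
      (Finset.range (tt h (y i))).image (fun j : ℕ => ((2 : Fin 5), i + (j : ZMod M))) := by
    ext ⟨b, k⟩
    have h1 := tt_le_h h (x i)
    have h2 := tt_le_h h (y i)
    simp only [SimpleGraph.mem_neighborFinset, adj_iff, rel_iff h M x y hx hy, Finset.mem_union,
      Finset.mem_image, Finset.mem_range, Prod.mk.injEq]
    constructor
    · rintro ⟨-, ⟨j, hj, rfl, H⟩ | ⟨j, hj, rfl, H⟩⟩
      · rcases H with ⟨-, rfl, H⟩ | ⟨H, -⟩ | ⟨-, rfl, H⟩ | ⟨H, -⟩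
        · exact Or.inl ⟨j, H, rfl, rfl⟩
        · exact absurd H (by decide)
        · exact Or.inr ⟨j, H, rfl, rfl⟩
        · exact absurd H (by decide)
      · rcases H with ⟨-, H, -⟩ | ⟨-, H, -⟩ | ⟨-, H, -⟩ | ⟨-, H, -⟩ <;> exact absurd H (by decide)
    · rintro (⟨j, hj, rfl, rfl⟩ | ⟨j, hj, rfl, rfl⟩)
      · exact ⟨by simp, Or.inl ⟨j, by omega, rfl, by simp [hj]⟩⟩
      · exact ⟨by simp, Or.inl ⟨j, by omega, rfl, by simp [hj]⟩⟩
  rw [this, Finset.card_union_of_disjoint, Finset.card_image_of_injOn, Finset.card_image_of_injOn,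
    Finset.card_range, Finset.card_range]
  · intro j hj k hk e
    simp only [Finset.coe_range, Set.mem_Iio, Prod.mk.injEq, add_right_inj, true_and] at hj hk e
    have h2 := tt_le_h h (y i)
    exact cast_inj' h M hM j k (by omega) (by omega) e
  · intro j hj k hk e
    simp only [Finset.coe_range, Set.mem_Iio, Prod.mk.injEq, add_right_inj, true_and] at hj hk e
    have h2 := tt_le_h h (x i)
    exact cast_inj' h M hM j k (by omega) (by omega) e
  · rw [Finset.disjoint_left]
    rintro ⟨b, k⟩ hb hc
    simp only [Finset.mem_image, Prod.mk.injEq] at hb hc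
    obtain ⟨_, _, rfl, _⟩ := hb
    obtain ⟨_, _, H, _⟩ := hc
    exact absurd H (by decide)

lemma deg_b (i : ZMod M) : (hGadget h M x y).degree (1, i) = h := by
  rw [← SimpleGraph.card_neighborFinset_eq_degree]
  have : (hGadget h M x y).neighborFinset (1, i) =
      (Finset.range h).image (fun j : ℕ =>
        ((if j < tt h (x (i - j)) then 0 else 3 : Fin 5), i - (j : ZMod M))) := by
    ext ⟨b, k⟩
    simp only [SimpleGraph.mem_neighborFinset, adj_iff, rel_iff h M x y hx hy,
      Finset.mem_image, Finset.mem_range, Prod.mk.injEq]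
    constructor
    · rintro ⟨-, ⟨j, hj, rfl, H⟩ | ⟨j, hj, rfl, H⟩⟩
      · rcases H with ⟨H, -⟩ | ⟨H, -⟩ | ⟨H, -⟩ | ⟨H, -⟩ <;> exact absurd H (by decide)
      · refine ⟨j, hj, ?_, by ring⟩
        rw [add_sub_cancel_right]
        rcases H with ⟨rfl, -, H⟩ | ⟨rfl, -, H⟩ | ⟨-, H, -⟩ | ⟨-, H, -⟩
        · rw [if_pos H]
        · rw [if_neg (by omega)]
        · exact absurd H (by decide)
        · exact absurd H (by decide)
    · rintro ⟨j, hj, rfl, rfl⟩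
      refine ⟨?_, Or.inr ⟨j, hj, by simp, ?_⟩⟩
      · split_ifs <;> simp
      · split_ifs with H
        · simp [H]
        · simp [not_lt.1 H]
  rw [this, Finset.card_image_of_injOn, Finset.card_range]
  intro j hj k hk e
  simp only [Finset.coe_range, Set.mem_Iio, Prod.mk.injEq, sub_right_inj] at hj hk e
  exact cast_inj' h M hM j k hj hk e.2

lemma deg_c (i : ZMod M) : (hGadget h M x y).degree (2, i) = h := by
  rw [← SimpleGraph.card_neighborFinset_eq_degree]
  have : (hGadget h M x y).neighborFinset (2, i) =
      (Finset.range h).image (fun j : ℕ =>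
        ((if j < tt h (y (i - j)) then 0 else 4 : Fin 5), i - (j : ZMod M))) := by
    ext ⟨b, k⟩
    simp only [SimpleGraph.mem_neighborFinset, adj_iff, rel_iff h M x y hx hy,
      Finset.mem_image, Finset.mem_range, Prod.mk.injEq]
    constructor
    · rintro ⟨-, ⟨j, hj, rfl, H⟩ | ⟨j, hj, rfl, H⟩⟩
      · rcases H with ⟨H, -⟩ | ⟨H, -⟩ | ⟨H, -⟩ | ⟨H, -⟩ <;> exact absurd H (by decide)
      · refine ⟨j, hj, ?_, by ring⟩
        rw [add_sub_cancel_right]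
        rcases H with ⟨-, H, -⟩ | ⟨-, H, -⟩ | ⟨rfl, -, H⟩ | ⟨rfl, -, H⟩
        · exact absurd H (by decide)
        · exact absurd H (by decide)
        · rw [if_pos H]
        · rw [if_neg (by omega)]
    · rintro ⟨j, hj, rfl, rfl⟩
      refine ⟨?_, Or.inr ⟨j, hj, by simp, ?_⟩⟩
      · split_ifs <;> simp
      · split_ifs with H
        · simp [H]
        · simp [not_lt.1 H]
  rw [this, Finset.card_image_of_injOn, Finset.card_range]
  intro j hj k hk e
  simp only [Finset.coe_range, Set.mem_Iio, Prod.mk.injEq, sub_right_inj] at hj hk e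
  exact cast_inj' h M hM j k hj hk e.2

omit hM in
lemma deg_de (a : Fin 5) (ha : a = 3 ∨ a = 4) (i : ZMod M) :
    (hGadget h M x y).degree (a, i) ≤ h := by
  rw [← SimpleGraph.card_neighborFinset_eq_degree]
  have : (hGadget h M x y).neighborFinset (a, i) ⊆
      (Finset.range h).image (fun j : ℕ =>
        ((if a = 3 then 1 else 2 : Fin 5), i + (j : ZMod M))) := by
    rintro ⟨b, k⟩
    simp only [SimpleGraph.mem_neighborFinset, adj_iff, rel_iff h M x y hx hy,
      Finset.mem_image, Finset.mem_range, Prod.mk.injEq]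
    rintro ⟨-, ⟨j, hj, rfl, H⟩ | ⟨j, hj, rfl, H⟩⟩
    · refine ⟨j, hj, ?_, rfl⟩
      rcases ha with rfl | rfl <;> simp at H ⊢ <;> exact H.1.symm
    · rcases ha with rfl | rfl <;> simp at H
  calc _ ≤ _ := Finset.card_le_card this
    _ ≤ _ := Finset.card_image_le
    _ = h := Finset.card_range h

lemma deg_big (h4 : 4 ∣ h) (v : Fin 5 × ZMod M) (hv : h < (hGadget h M x y).degree v) :
    ∃ i, x i * y i = 1 ∧ (0, i) = v := by
  obtain ⟨a, i⟩ := v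
  have hde := deg_de h M x y hx hy a
  fin_cases a
  · refine ⟨i, ?_, rfl⟩
    have := deg_a h M hM x y hx hy i
    simp only [Fin.zero_eta] at hv
    rw [this] at hv
    have h1 := hx i
    have h2 := hy i
    generalize x i = p at *
    generalize y i = q at *
    unfold tt at hv
    interval_cases p <;> interval_cases q <;> simp at hv ⊢ <;> omega
  · exact absurd (deg_b h M hM x y hx hy i) hv.ne'
  · exact absurd (deg_c h M hM x y hx hy i) hv.ne'
  · exact absurd (hde (Or.inl rfl) i) (not_le.2 hv)
  · exact absurd (hde (Or.inr rfl) i) (not_le.2 hv)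

omit hM [NeZero M] in
lemma ncard_supp [Fintype (ZMod M)] :
    ((fun i => ((0 : Fin 5), i)) '' {i : ZMod M | x i * y i = 1}).ncard
      = ∑ i : ZMod M, x i * y i := by
  rw [Set.ncard_image_of_injective _ (fun a b e => by simpa using e)]
  have : ∀ i ∈ Finset.univ, x i * y i = if x i * y i = 1 then 1 else 0 := by
    intro i _
    have : x i * y i ≤ 1 := Nat.mul_le_mul (hx i) (hy i)
    split_ifs <;> omega
  rw [Finset.sum_congr rfl this, ← Finset.card_filter, ← Set.ncard_coe_finset]
  simp

end

/-- **h-index and ccdh of the h-index-sensitive gadget graph.** Under the disjointness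
promise `∑ᵢ xᵢyᵢ ≤ 1`, the h-index of `H_{x,y}` equals exactly `h` and the ccdh
satisfies `C(3h/2) = ∑ᵢ xᵢyᵢ`; in particular `C(3h/2) = 0` if the supports of `x` and
`y` are disjoint and `C(3h/2) = 1` if they intersect in exactly one index. -/
theorem hGadget_hIndex_and_ccdh (h M : ℕ) [NeZero M] (hh : 4 ≤ h) (h4 : 4 ∣ h)
    (hM : h ≤ M) (x y : ZMod M → ℕ) (hx : ∀ i, x i ≤ 1) (hy : ∀ i, y i ≤ 1)
    (hpromise : (∑ i : ZMod M, x i * y i) ≤ 1) :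
    hIndex (hGadget h M x y) = h ∧
    ccdh (hGadget h M x y) (3 * h / 2) = ∑ i : ZMod M, x i * y i ∧
    ((∑ i : ZMod M, x i * y i) = 0 → ccdh (hGadget h M x y) (3 * h / 2) = 0) ∧
    ((∑ i : ZMod M, x i * y i) = 1 → ccdh (hGadget h M x y) (3 * h / 2) = 1) := by

  have hsum := ncard_supp M x y hx hy
  have hc : ccdh (hGadget h M x y) (3 * h / 2) = ∑ i : ZMod M, x i * y i := by
    rw [← hsum]
    unfold ccdh
    congr 1
    ext v
    simp only [Set.mem_setOf_eq, Set.mem_image]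
    constructor
    · intro hv
      exact deg_big h M hM x y hx hy h4 v (by omega)
    · rintro ⟨i, hi, rfl⟩
      rw [deg_a h M hM x y hx hy i, Nat.eq_one_of_mul_eq_one_right hi,
        Nat.eq_one_of_mul_eq_one_left hi]
      simp only [tt, if_true]
      omega
  refine ⟨?_, hc, fun e => by rw [hc, e], fun e => by rw [hc, e]⟩
  unfold hIndex
  apply le_antisymm
  · apply Finset.sup_le
    intro d hd
    simp only [Finset.mem_filter, Finset.mem_Icc, id] at hd ⊢
    by_contra hlt
    have : ccdh (hGadget h M x y) d ≤ 1 := by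
      refine le_trans ?_ (hsum.le.trans hpromise)
      refine Set.ncard_le_ncard ?_ (Set.toFinite _)
      intro v hv
      exact deg_big h M hM x y hx hy h4 v (lt_of_lt_of_le (not_le.1 hlt) hv)
    omega
  · refine Finset.le_sup (f := id) (b := h) ?_
    simp only [Finset.mem_filter, Finset.mem_Icc, Fintype.card_prod, Fintype.card_fin, ZMod.card]
    refine ⟨⟨by omega, by omega⟩, hM.trans ?_⟩
    have : ((fun i => ((1 : Fin 5), i)) '' (Set.univ : Set (ZMod M))).ncard = M := by
      rw [Set.ncard_image_of_injective _ (fun a b e => by simpa using e), Set.ncard_univ,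
        Nat.card_eq_fintype_card, ZMod.card]
    refine this.symm.le.trans (Set.ncard_le_ncard ?_ (Set.toFinite _))
    rintro _ ⟨i, -, rfl⟩
    exact (deg_b h M hM x y hx hy i).ge
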